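/- arXiv:2505.07676 — 2 statements merged into one kernel-verified Lean document; each statement's English description precedes it below -/
import Mathlib

section
/- Let K ∈ ℝ^{n×n} be a symmetric positive semidefinite matrix, C ∈ ℝ^{M×n}, y ∈ ℝ^M, λ > 0, and let ω_1,…,ω_M > 0 be weights. Set Λ = diag(λ/ω_1,…,λ/ω_M) and define F(β) = Σ_{m=1}^M ω_m (y_m − (C K β)_m)² + λ βᵀ K β for β ∈ ℝ^n. Then the matrix C K Cᵀ + Λ is invertible, the vector β* = Cᵀ (C K Cᵀ + Λ)^{-1} y is a global minimizer of F, and every global minimizer β of F satisfies K β = K β*. -/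
open Matrix

/-!
Measure the residual by the quadratic form of `Λ⁻¹`, so that the objective is
`J_y(β) = (y - C K β)ᴴ Λ⁻¹ (y - C K β) + βᴴ K β`. At `β* = Cᴴ a` with `(C K Cᴴ + Λ) a = y` the
residual is `Λ a`, so the first-order terms of the fit and of the penalty cancel and
`J_y(β* + d) = J_y(β*) + J_0(d)`. Finally `J_0(d) ≥ 0`, with equality exactly when `K d = 0`.
The weighted sum of squares is the case `Λ = diag(λ/ω)`, up to the overall factor `λ`.
-/

namespace KernelRidge

variable {ι κ : Type*} [Fintype ι] [Fintype κ]

section NonUnitalSemiring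

variable {R : Type*} [NonUnitalSemiring R] [StarRing R]

theorem star_add_dotProduct_mulVec_add (A : Matrix ι ι R) (u v : ι → R) :
    star (u + v) ⬝ᵥ (A *ᵥ (u + v)) =
      star u ⬝ᵥ (A *ᵥ u) + star v ⬝ᵥ (A *ᵥ v) + (star u ⬝ᵥ (A *ᵥ v) + star v ⬝ᵥ (A *ᵥ u)) := by
  simp only [star_add, mulVec_add, add_dotProduct, dotProduct_add]
  abel

theorem star_mulVec_dotProduct (A : Matrix κ ι R) (u : ι → R) (v : κ → R) :
    star (A *ᵥ u) ⬝ᵥ v = star u ⬝ᵥ (Aᴴ *ᵥ v) := by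
  rw [star_mulVec, dotProduct_mulVec]

end NonUnitalSemiring

variable [DecidableEq κ]

section CommRing

variable {R : Type*} [CommRing R] [StarRing R]

/-- The objective of generalized kernel ridge regression with Gram matrix `K`, design matrix `C`,
noise covariance `Λ` and observations `y`, as a function of the coefficient vector `β`. The
fit term is the intended one only for invertible `Λ`, since otherwise `Λ⁻¹ = 0`. -/
noncomputable def objective (K : Matrix ι ι R) (C : Matrix κ ι R) (Λ : Matrix κ κ R) (y : κ → R)
    (β : ι → R) : R :=
  star (y - C *ᵥ (K *ᵥ β)) ⬝ᵥ (Λ⁻¹ *ᵥ (y - C *ᵥ (K *ᵥ β))) + star β ⬝ᵥ (K *ᵥ β)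

/-- The dual vector `a` solving `(C K Cᴴ + Λ) a = y`, provided that `C K Cᴴ + Λ` is invertible. -/
noncomputable def dualSolution (K : Matrix ι ι R) (C : Matrix κ ι R) (Λ : Matrix κ κ R)
    (y : κ → R) : κ → R :=
  (C * K * Cᴴ + Λ)⁻¹ *ᵥ y

/-- The closed-form coefficient vector `β* = Cᴴ (C K Cᴴ + Λ)⁻¹ y` of kernel ridge regression. -/
noncomputable def solution (K : Matrix ι ι R) (C : Matrix κ ι R) (Λ : Matrix κ κ R) (y : κ → R) :
    ι → R :=
  Cᴴ *ᵥ dualSolution K C Λ y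

theorem sub_mulVec_mulVec_solution {K : Matrix ι ι R} {C : Matrix κ ι R} {Λ : Matrix κ κ R}
    (hS : IsUnit (C * K * Cᴴ + Λ)) (y : κ → R) :
    y - C *ᵥ (K *ᵥ solution K C Λ y) = Λ *ᵥ dualSolution K C Λ y := by
  have normal_eq : (C * K * Cᴴ + Λ) *ᵥ dualSolution K C Λ y = y := by
    rw [dualSolution, mulVec_mulVec, mul_nonsing_inv _ ((isUnit_iff_isUnit_det _).mp hS),
      one_mulVec]
  rw [sub_eq_iff_eq_add', solution, mulVec_mulVec, mulVec_mulVec, ← add_mulVec, normal_eq]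

theorem objective_solution_add {K : Matrix ι ι R} (hK : K.IsHermitian) {C : Matrix κ ι R}
    {Λ : Matrix κ κ R} (hΛ : Λ.IsHermitian) (hΛu : IsUnit Λ) (hS : IsUnit (C * K * Cᴴ + Λ))
    (y : κ → R) (d : ι → R) :
    objective K C Λ y (solution K C Λ y + d) =
      objective K C Λ y (solution K C Λ y) + objective K C Λ 0 d := by
  set a := dualSolution K C Λ y
  set b := solution K C Λ y with hb
  set e := C *ᵥ (K *ᵥ d) with he
  have residual : y - C *ᵥ (K *ᵥ b) = Λ *ᵥ a := sub_mulVec_mulVec_solution hS y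
  have residual_add : y - C *ᵥ (K *ᵥ (b + d)) = Λ *ᵥ a + (0 - e) := by
    rw [mulVec_add, mulVec_add, ← residual]
    abel
  have hΛdet : IsUnit Λ.det := (isUnit_iff_isUnit_det Λ).mp hΛu
  have fit_left : star (Λ *ᵥ a) ⬝ᵥ (Λ⁻¹ *ᵥ (0 - e)) = -(star a ⬝ᵥ e) := by
    rw [star_mulVec_dotProduct, hΛ.eq, mulVec_mulVec, mul_nonsing_inv _ hΛdet, one_mulVec,
      zero_sub, dotProduct_neg]
  have fit_right : star (0 - e) ⬝ᵥ (Λ⁻¹ *ᵥ (Λ *ᵥ a)) = -(star e ⬝ᵥ a) := by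
    rw [mulVec_mulVec, nonsing_inv_mul _ hΛdet, one_mulVec, zero_sub, star_neg, neg_dotProduct]
  have penalty_left : star b ⬝ᵥ (K *ᵥ d) = star a ⬝ᵥ e := by
    rw [hb, solution, star_mulVec_dotProduct, conjTranspose_conjTranspose]
  have penalty_right : star d ⬝ᵥ (K *ᵥ b) = star e ⬝ᵥ a := by
    rw [he, star_mulVec_dotProduct, star_mulVec_dotProduct, hK.eq, hb, solution]
  rw [objective, objective, objective, residual_add, residual, star_add_dotProduct_mulVec_add,
    star_add_dotProduct_mulVec_add, fit_left, fit_right, penalty_left, penalty_right]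
  ring

end CommRing

theorem objective_zero_nonneg {R : Type*} [CommRing R] [PartialOrder R] [AddLeftMono R]
    [StarRing R] {K : Matrix ι ι R} (hK : K.PosSemidef) (C : Matrix κ ι R) {Λ : Matrix κ κ R}
    (hΛ : Λ.PosSemidef) (d : ι → R) : 0 ≤ objective K C Λ 0 d :=
  add_nonneg (hΛ.inv.dotProduct_mulVec_nonneg _) (hK.dotProduct_mulVec_nonneg d)

open ComplexOrder in
theorem objective_zero_eq_zero_iff {𝕜 : Type*} [RCLike 𝕜] {K : Matrix ι ι 𝕜} (hK : K.PosSemidef)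
    (C : Matrix κ ι 𝕜) {Λ : Matrix κ κ 𝕜} (hΛ : Λ.PosSemidef) (d : ι → 𝕜) :
    objective K C Λ 0 d = 0 ↔ K *ᵥ d = 0 := by
  rw [objective, add_eq_zero_iff_of_nonneg (hΛ.inv.dotProduct_mulVec_nonneg (0 - C *ᵥ (K *ᵥ d)))
    (hK.dotProduct_mulVec_nonneg d), hK.dotProduct_mulVec_zero_iff]
  refine ⟨And.right, fun hd => ⟨?_, hd⟩⟩
  rw [hd, mulVec_zero, sub_zero, mulVec_zero, dotProduct_zero]

theorem isUnit_mul_mul_conjTranspose_add {F : Type*} [Field F] [PartialOrder F] [AddLeftMono F]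
    [StarRing F] {K : Matrix ι ι F} (hK : K.PosSemidef) (C : Matrix κ ι F) {Λ : Matrix κ κ F}
    (hΛ : Λ.PosDef) : IsUnit (C * K * Cᴴ + Λ) :=
  (PosDef.posSemidef_add (hK.mul_mul_conjTranspose_same C) hΛ).isUnit

theorem weighted_sum_sq_add_eq_mul_objective {F : Type*} [Field F] [StarRing F] [TrivialStar F]
    (K : Matrix ι ι F) (C : Matrix κ ι F) (y : κ → F) {lam : F} (hlam : lam ≠ 0) {ω : κ → F}
    (hω : ∀ m, ω m ≠ 0) (β : ι → F) :
    (∑ m, ω m * (y m - (C *ᵥ (K *ᵥ β)) m) ^ 2) + lam * (β ⬝ᵥ (K *ᵥ β)) =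
      lam * objective K C (diagonal fun m => lam / ω m) y β := by
  have inv_diag : (diagonal fun m => lam / ω m)⁻¹ = diagonal fun m => ω m / lam := by
    refine inv_eq_left_inv ?_
    rw [diagonal_mul_diagonal, ← diagonal_one]
    congr 1 with m
    field_simp [hω m]
  have fit_eq (r : κ → F) :
      ∑ m, ω m * r m ^ 2 = lam * (r ⬝ᵥ ((diagonal fun m => ω m / lam) *ᵥ r)) := by
    rw [dotProduct, Finset.mul_sum]
    refine Finset.sum_congr rfl fun m _ => ?_
    rw [mulVec_diagonal]
    field_simp
  simp only [objective, inv_diag, star_trivial, mul_add, ← fit_eq, Pi.sub_apply]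

end KernelRidge

open KernelRidge ComplexOrder in
theorem stmt_0_general {ι κ 𝕜 : Type*} [Fintype ι] [Fintype κ] [DecidableEq κ] [RCLike 𝕜]
    {K : Matrix ι ι 𝕜} (hK : K.PosSemidef) (C : Matrix κ ι 𝕜) {Λ : Matrix κ κ 𝕜} (hΛ : Λ.PosDef)
    (y : κ → 𝕜) :
    IsUnit (C * K * Cᴴ + Λ) ∧
      ∀ β, (∀ β', objective K C Λ y β ≤ objective K C Λ y β') ↔
        K *ᵥ β = K *ᵥ solution K C Λ y := by
  have hS := isUnit_mul_mul_conjTranspose_add hK C hΛ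
  have excess (β : ι → 𝕜) : objective K C Λ y β =
      objective K C Λ y (solution K C Λ y) + objective K C Λ 0 (β - solution K C Λ y) := by
    rw [← objective_solution_add hK.isHermitian hΛ.isHermitian hΛ.isUnit hS, add_sub_cancel]
  have excess_nonneg := objective_zero_nonneg hK C hΛ.posSemidef
  refine ⟨hS, fun β => ?_⟩
  rw [← sub_eq_zero (a := K *ᵥ β), ← mulVec_sub,
    ← objective_zero_eq_zero_iff hK C hΛ.posSemidef]
  constructor
  · intro hβ
    have h := hβ (solution K C Λ y)
    rw [excess β, add_le_iff_nonpos_right] at h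
    exact h.antisymm (excess_nonneg _)
  · intro hβ β'
    rw [excess β, hβ, add_zero, excess β']
    exact le_add_of_nonneg_right (excess_nonneg _)

/-- Finite-dimensional core of the vector-valued kernel ridge regression
representer theorem: with `K` symmetric positive semidefinite, weights `ω_m > 0`,
`Λ = diag(λ/ω_1,…,λ/ω_M)` and
`F(β) = Σ_m ω_m (y_m − (C K β)_m)² + λ βᵀ K β`, the matrix `C K Cᵀ + Λ` is
invertible, `β* = Cᵀ (C K Cᵀ + Λ)⁻¹ y` is a global minimizer of `F`, and every
global minimizer `β` of `F` satisfies `K β = K β*`. -/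
theorem stmt_0 {n M : ℕ} (K : Matrix (Fin n) (Fin n) ℝ) (hK : K.PosSemidef)
    (C : Matrix (Fin M) (Fin n) ℝ) (y : Fin M → ℝ)
    (lam : ℝ) (hlam : 0 < lam) (ω : Fin M → ℝ) (hω : ∀ m, 0 < ω m)
    (Λ : Matrix (Fin M) (Fin M) ℝ)
    (hΛ : Λ = Matrix.diagonal fun m => lam / ω m)
    (F : (Fin n → ℝ) → ℝ)
    (hF : F = fun β => (∑ m, ω m * (y m - (C *ᵥ (K *ᵥ β)) m) ^ 2)
      + lam * (β ⬝ᵥ (K *ᵥ β)))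
    (βstar : Fin n → ℝ)
    (hβstar : βstar = Cᵀ *ᵥ ((C * K * Cᵀ + Λ)⁻¹ *ᵥ y)) :
    IsUnit (C * K * Cᵀ + Λ) ∧
      (∀ β, F βstar ≤ F β) ∧
      (∀ β, (∀ β', F β ≤ F β') → K *ᵥ β = K *ᵥ βstar) := by
  have hF_eq (β : Fin n → ℝ) : F β = lam * KernelRidge.objective K C Λ y β := by
    rw [hF, hΛ]
    exact KernelRidge.weighted_sum_sq_add_eq_mul_objective K C y hlam.ne' (fun m => (hω m).ne') β
  have hΛpos : Λ.PosDef := hΛ ▸ PosDef.diagonal fun m => div_pos hlam (hω m)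
  have hβstar_eq : βstar = KernelRidge.solution K C Λ y := hβstar
  obtain ⟨hunit, hmin⟩ := stmt_0_general hK C hΛpos y
  simp only [hF_eq, mul_le_mul_iff_right₀ hlam, hβstar_eq]
  exact ⟨hunit, (hmin _).mpr rfl, fun β => (hmin β).mp⟩
end

section
/- Let K : E × E → ℝ^{A×A} be a matrix-valued kernel. Define the diagonal matrix S(x) ∈ ℝ^{A×A} by S_{aa}(x) = K_{aa}(x,x)^{1/2}, and define R : E × E → ℝ^{A×A} by: R_{ab}(x,y) = 1 if a = b and x = y; R_{ab}(x,y) = S_{aa}(x)^{-1} K_{ab}(x,y) S_{bb}(y)^{-1} if S_{aa}(x) > 0 and S_{bb}(y) > 0; and R_{ab}(x,y) = 0 otherwise. Then R is a matrix-valued kernel that is normalized in the sense that R_{aa}(x,x) = 1 for all a and x, and the decomposition K(x,y) = S(x) R(x,y) S(y) holds for all x,y ∈ E. -/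
open Matrix

/-- A matrix-valued kernel on a set `E`: `K(x,y)ᵀ = K(y,x)` and
`Σ_{i,j} v_iᵀ K(x_i,x_j) v_j ≥ 0` for all finite collections of points and
vectors. -/
def IsMatrixKernel {E : Type*} {A : ℕ} (K : E → E → Matrix (Fin A) (Fin A) ℝ) : Prop :=
  (∀ x y, (K x y)ᵀ = K y x) ∧
    ∀ (n : ℕ) (x : Fin n → E) (v : Fin n → Fin A → ℝ),
      0 ≤ ∑ i, ∑ j, v i ⬝ᵥ ((K (x i) (x j)) *ᵥ v j)

/-!
A matrix-valued kernel on `E` is the same thing as a positive semidefinite matrix indexed by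
`E × Fin A`. In such a matrix `M`, a zero diagonal entry forces its whole row and column to vanish,
so rescaling the rows and columns by `√(M i i)` loses no information. The normalization of `M` is
positive semidefinite, being a diagonal congruence of `M` plus the diagonal projection onto the
indices `i` with `M i i = 0`.
-/

section PosSemidef

theorem posSemidef_star_mul_mul {ι R : Type*} [Ring R] [PartialOrder R] [StarRing R]
    {M : Matrix ι ι R} (hM : M.PosSemidef) (d : ι → R) :
    (of fun i j ↦ star (d i) * M i j * d j).PosSemidef where
  left := .ext fun i j ↦ by simp [hM.isHermitian.apply, mul_assoc]
  right x := by
    simpa [Finsupp.sum_sum_index, add_mul, mul_add, mul_assoc, -Finsupp.single_mul] using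
      hM.2 (x.sum fun i xi ↦ .single i (d i * xi))

variable {ι 𝕜 : Type*} [RCLike 𝕜] {M : Matrix ι ι 𝕜}

open scoped ComplexOrder in
theorem norm_apply_sq_le_of_posSemidef (hM : M.PosSemidef) (i j : ι) :
    ‖M i j‖ ^ 2 ≤ RCLike.re (M i i) * RCLike.re (M j j) := by
  have hdet := (hM.submatrix ![i, j]).det_nonneg
  have hji : M j i = star (M i j) := (hM.isHermitian.apply j i).symm
  have hdet_eq : (M.submatrix ![i, j] ![i, j]).det =
      ((RCLike.re (M i i) * RCLike.re (M j j) - ‖M i j‖ ^ 2 : ℝ) : 𝕜) := by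
    rw [det_fin_two]
    simp [hji, hM.isHermitian.coe_re_apply_self, RCLike.mul_conj]
  rw [hdet_eq, RCLike.ofReal_nonneg] at hdet
  exact sub_nonneg.mp hdet

/-- The vector of square roots of the diagonal entries of `M`, the paper's diagonal matrix `S`.
Only the real parts enter, as the diagonal of a positive semidefinite matrix is real. -/
noncomputable def sqrtDiag (M : Matrix ι ι 𝕜) (i : ι) : ℝ :=
  √(RCLike.re (M i i))

theorem sqrtDiag_nonneg (M : Matrix ι ι 𝕜) (i : ι) : 0 ≤ sqrtDiag M i :=
  Real.sqrt_nonneg _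

open Classical in
/-- The normalization of a positive semidefinite matrix to unit diagonal, the paper's `R`. Off the
diagonal, an entry whose row or column has zero diagonal entry is `0` because `0⁻¹ = 0`. -/
noncomputable def correlationMatrix (M : Matrix ι ι 𝕜) : Matrix ι ι 𝕜 :=
  .of fun i j ↦ if i = j then 1 else (sqrtDiag M i : 𝕜)⁻¹ * M i j * (sqrtDiag M j : 𝕜)⁻¹

theorem eq_correlationMatrix {N : Matrix ι ι 𝕜} (hdiag : ∀ i, N i i = 1)
    (hpos : ∀ i j, 0 < sqrtDiag M i → 0 < sqrtDiag M j →
      N i j = (sqrtDiag M i : 𝕜)⁻¹ * M i j * (sqrtDiag M j : 𝕜)⁻¹)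
    (hzero : ∀ i j, i ≠ j → ¬(0 < sqrtDiag M i ∧ 0 < sqrtDiag M j) → N i j = 0) :
    N = correlationMatrix M := by
  ext i j
  obtain rfl | hij := eq_or_ne i j
  · simp [correlationMatrix, hdiag]
  simp only [correlationMatrix, of_apply, if_neg hij]
  obtain hi | hi := (sqrtDiag_nonneg M i).eq_or_lt
  · simp [hzero i j hij, ← hi]
  obtain hj | hj := (sqrtDiag_nonneg M j).eq_or_lt
  · simp [hzero i j hij, ← hj]
  exact hpos i j hi hj

open scoped ComplexOrder

theorem sqrtDiag_mul_self (hM : M.PosSemidef) (i : ι) :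
    (sqrtDiag M i * sqrtDiag M i : 𝕜) = M i i := by
  have hre : 0 ≤ RCLike.re (M i i) := (RCLike.nonneg_iff.mp hM.diag_nonneg).1
  rw [sqrtDiag, ← RCLike.ofReal_mul, Real.mul_self_sqrt hre]
  exact hM.isHermitian.coe_re_apply_self i

theorem apply_eq_zero_of_sqrtDiag_left_eq_zero (hM : M.PosSemidef) {i : ι}
    (hi : sqrtDiag M i = 0) (j : ι) : M i j = 0 := by
  have hre : RCLike.re (M i i) = 0 := by simp [← sqrtDiag_mul_self hM, hi]
  have hle := norm_apply_sq_le_of_posSemidef hM i j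
  rw [hre, zero_mul] at hle
  simpa using hle.antisymm (sq_nonneg _)

theorem apply_eq_zero_of_sqrtDiag_right_eq_zero (hM : M.PosSemidef) (i : ι) {j : ι}
    (hj : sqrtDiag M j = 0) : M i j = 0 := by
  rw [← hM.isHermitian.apply, apply_eq_zero_of_sqrtDiag_left_eq_zero hM hj, star_zero]

theorem sqrtDiag_mul_correlationMatrix_mul_sqrtDiag (hM : M.PosSemidef) (i j : ι) :
    sqrtDiag M i * correlationMatrix M i j * sqrtDiag M j = M i j := by
  obtain rfl | hij := eq_or_ne i j
  · simp [correlationMatrix, sqrtDiag_mul_self hM]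
  by_cases hi : sqrtDiag M i = 0
  · simp [hi, apply_eq_zero_of_sqrtDiag_left_eq_zero hM hi]
  by_cases hj : sqrtDiag M j = 0
  · simp [hj, apply_eq_zero_of_sqrtDiag_right_eq_zero hM i hj]
  have hi' : (sqrtDiag M i : 𝕜) ≠ 0 := RCLike.ofReal_ne_zero.mpr hi
  have hj' : (sqrtDiag M j : 𝕜) ≠ 0 := RCLike.ofReal_ne_zero.mpr hj
  simp only [correlationMatrix, of_apply, if_neg hij]
  field_simp

open Classical in
theorem correlationMatrix_eq_add_diagonal (hM : M.PosSemidef) :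
    correlationMatrix M =
      .of (fun i j ↦ star (sqrtDiag M i : 𝕜)⁻¹ * M i j * (sqrtDiag M j : 𝕜)⁻¹) +
        diagonal fun i ↦ if sqrtDiag M i = 0 then 1 else 0 := by
  ext i j
  obtain rfl | hij := eq_or_ne i j
  · by_cases hi : sqrtDiag M i = 0 <;> simp [correlationMatrix, ← sqrtDiag_mul_self hM, hi]
  · simp [correlationMatrix, hij]

theorem posSemidef_correlationMatrix (hM : M.PosSemidef) : (correlationMatrix M).PosSemidef := by
  classical
  rw [correlationMatrix_eq_add_diagonal hM]
  refine (posSemidef_star_mul_mul hM _).add (.diagonal fun i ↦ ?_)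
  dsimp only [Pi.zero_apply]
  split_ifs <;> simp

end PosSemidef

theorem isMatrixKernel_iff_posSemidef_comp {E : Type*} {A : ℕ}
    {K : E → E → Matrix (Fin A) (Fin A) ℝ} :
    IsMatrixKernel K ↔ (comp E E (Fin A) (Fin A) ℝ (.of K)).PosSemidef := by
  refine ⟨fun hK ↦ ⟨?_, fun f ↦ ?_⟩, fun hM ↦ ⟨fun x y ↦ ?_, fun n x v ↦ ?_⟩⟩
  · exact .ext fun ⟨x, a⟩ ⟨y, b⟩ ↦ congr_fun₂ (hK.1 y x) a b
  · -- Points of `E` may repeat, so each element of `f.support` gets its own point and vector.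
    let e := f.support.equivFin.symm
    have hsum := hK.2 _ (fun i ↦ (e i).1.1) (fun i ↦ Pi.single (e i).1.2 (f (e i)))
    have hterm (p q : E × Fin A) : Pi.single p.2 (f p) ⬝ᵥ (K p.1 q.1 *ᵥ Pi.single q.2 (f q)) =
        star (f p) * comp E E (Fin A) (Fin A) ℝ (.of K) p q * f q := by
      simp only [mulVec_single, single_dotProduct, Pi.smul_apply, col_apply,
        MulOpposite.smul_eq_mul_unop, MulOpposite.unop_op, comp_apply, of_apply, star_trivial,
        mul_assoc]
    simp only [hterm] at hsum
    simp_rw [Finsupp.sum, ← Finset.sum_coe_sort f.support, ← e.sum_comp]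
    exact hsum
  · ext a b
    exact hM.isHermitian.apply (y, a) (x, b)
  · have hsum := (hM.submatrix (Prod.map x id)).dotProduct_mulVec_nonneg fun p ↦ v p.1 p.2
    refine hsum.trans_eq ?_
    simp only [dotProduct, mulVec, Fintype.sum_prod_type, Finset.mul_sum, Pi.star_apply,
      star_trivial, submatrix_apply, Prod.map_apply, id_eq, comp_apply, of_apply]
    exact Finset.sum_congr rfl fun i _ ↦ Finset.sum_comm

/-- Kernel normalization decomposition (existence part): for a matrix-valued
kernel `K`, with `S(x) = diag(K_{aa}(x,x)^{1/2})` and `R` defined by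
`R_{ab}(x,y) = 1` if `a = b` and `x = y`,
`R_{ab}(x,y) = S_{aa}(x)⁻¹ K_{ab}(x,y) S_{bb}(y)⁻¹` if `S_{aa}(x) > 0` and
`S_{bb}(y) > 0`, and `R_{ab}(x,y) = 0` otherwise, the function `R` is a
normalized matrix-valued kernel and `K(x,y) = S(x) R(x,y) S(y)`. -/
theorem stmt_10 {E : Type*} {A : ℕ} (K : E → E → Matrix (Fin A) (Fin A) ℝ)
    (hK : IsMatrixKernel K)
    (S : E → Matrix (Fin A) (Fin A) ℝ)
    (hS : ∀ x, S x = Matrix.diagonal (fun a => Real.sqrt (K x x a a)))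
    (R : E → E → Matrix (Fin A) (Fin A) ℝ)
    (hRdiag : ∀ (a : Fin A) (x : E), R x x a a = 1)
    (hRpos : ∀ (a b : Fin A) (x y : E), 0 < S x a a → 0 < S y b b →
      R x y a b = (S x a a)⁻¹ * K x y a b * (S y b b)⁻¹)
    (hRzero : ∀ (a b : Fin A) (x y : E), ¬(a = b ∧ x = y) →
      ¬(0 < S x a a ∧ 0 < S y b b) → R x y a b = 0) :
    IsMatrixKernel R ∧ (∀ (a : Fin A) (x : E), R x x a a = 1) ∧
      ∀ x y, K x y = S x * R x y * S y := by
  have hM := isMatrixKernel_iff_posSemidef_comp.mp hK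
  set M := comp E E (Fin A) (Fin A) ℝ (.of K)
  have hSM (x : E) : S x = diagonal fun a ↦ sqrtDiag M (x, a) := hS x
  simp only [hSM, diagonal_apply_eq] at hRpos hRzero
  have hRM : comp E E (Fin A) (Fin A) ℝ (.of R) = correlationMatrix M :=
    eq_correlationMatrix (fun p ↦ hRdiag p.2 p.1) (fun p q ↦ hRpos p.2 q.2 p.1 q.1)
      fun p q hpq ↦ hRzero p.2 q.2 p.1 q.1 fun h ↦ hpq (Prod.ext h.2 h.1)
  refine ⟨isMatrixKernel_iff_posSemidef_comp.mpr (hRM ▸ posSemidef_correlationMatrix hM), hRdiag,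
    fun x y ↦ ?_⟩
  ext a b
  have hRab : R x y a b = correlationMatrix M (x, a) (y, b) := congr_fun₂ hRM (x, a) (y, b)
  rw [hSM, hSM, mul_diagonal, diagonal_mul, hRab]
  exact (sqrtDiag_mul_correlationMatrix_mul_sqrtDiag hM (x, a) (y, b)).symm
end
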